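/- Let $n_u, n_s \ge 1$, and let $I_u \subseteq \mathbb{R}^{n_u}$ and $I_s \subseteq \mathbb{R}^{n_s}$ be compact disks of dimension $n_u$ and $n_s$, i.e. subsets homeomorphic to the closed unit ball of $\mathbb{R}^{n_u}$ and of $\mathbb{R}^{n_s}$, respectively. Set $R = I_u \times I_s \subseteq \mathbb{R}^{n_u} \times \mathbb{R}^{n_s}$. Call a set of the form $\{(u,\psi(u)) : u \in I_u\}$ with $\psi : I_u \to I_s$ continuous a horizontal slice of $R$. Let $f : \mathbb{R}^{n_u} \times \mathbb{R}^{n_s} \to \mathbb{R}^{n_u} \times \mathbb{R}^{n_s}$ be a homeomorphism and let $N \ge 1$. Suppose that for every $s \in I_s$ there exist pairwise disjoint horizontal slices $h_1(s), \dots, h_N(s)$ of $R$ such that $f(I_u \times \{s\}) \cap R = h_1(s) \cup \dots \cup h_N(s)$. Then there exists a nonempty compact set $\Lambda \subseteq \bigcap_{n \in \mathbb{Z}} f^n(R)$ with $f(\Lambda) = \Lambda$, together with a continuous surjection $\pi : \Lambda \to \{1,\dots,N\}^{\mathbb{Z}}$ (the full shift space with the product topology) satisfying $\pi(f(x)) =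 \sigma(\pi(x))$ for all $x \in \Lambda$, where $\sigma$ is the left shift map $\sigma(\omega)(k) = \omega(k+1)$. -/

import Mathlib

/-- A compact `n`-dimensional disk in `ℝⁿ`: a subset homeomorphic to the closed unit ball
of `ℝⁿ`. -/
def IsCompactDisk {n : ℕ} (D : Set (EuclideanSpace ℝ (Fin n))) : Prop :=
  Nonempty (D ≃ₜ Metric.closedBall (0 : EuclideanSpace ℝ (Fin n)) 1)

/-- The horizontal disk `I_u × {s}` at level `s`. -/
def horizontalDisk {E F : Type*} (Iu : Set E) (s : F) : Set (E × F) :=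
  Iu ×ˢ {s}

/-- A horizontal slice of `I_u × I_s`: the graph of a continuous function `I_u → I_s`. -/
def IsHorizontalSlice {E F : Type*} [TopologicalSpace E] [TopologicalSpace F]
    (Iu : Set E) (Is : Set F) (h : Set (E × F)) : Prop :=
  ∃ ψ : Iu → Is, Continuous ψ ∧ h = {p | ∃ u : Iu, p = ((u : E), (ψ u : F))}

/-- The left shift on the full shift space on `N` symbols. -/
def fullShift (N : ℕ) (ω : ℤ → Fin N) : ℤ → Fin N :=
  fun k => ω (k + 1)

/-!
For `x` with `x` and `f x` both in `R = I_u × I_s`, let `p x ∈ I_u × I_s` consist of the horizontal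
coordinate of `f x` and the vertical coordinate of `x`. The hypothesis says that over each level
`I_u × {s}` the map `p` is trivial with `N` sheets, but it says nothing about how the sheets at
different levels fit together. Two sheets at nearby levels whose first points are close stay
uniformly close, and by Brouwer's theorem every map close to an embedding of the disk covers a
common interior point `c`. Two points near `x` with the same value of `p` thus lie on sheets of one
level that both pass over `c`, hence coincide. So `p` is locally injective with fibres of
cardinality `N`, a covering of a contractible space, and it has `N` disjoint global sections
`σ i`, labelled by the symbols.

A periodic itinerary is realised by a closed chain of points, one on each prescribed section, whose
matching conditions say that a self-map of a finite power of `I_u × I_s` has a fixed point; this is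
again Brouwer's theorem. Compactness extends this from periodic to arbitrary itineraries.
-/

open MeasureTheory Metric Set Topology

section Determinant

theorem exists_polynomial_eval_eq_det_one_add_smul {K V : Type*} [Field K] [AddCommGroup V]
    [Module K V] [FiniteDimensional K V] (f : V →ₗ[K] V) :
    ∃ q : Polynomial K, q.natDegree ≤ Module.finrank K V ∧
      ∀ t, q.eval t = LinearMap.det (1 + t • f) := by
  let b := Module.finBasis K V
  let M := LinearMap.toMatrix b b f
  refine ⟨(((Polynomial.X : Polynomial K) • M.map Polynomial.C +
    (1 : Matrix _ _ K).map Polynomial.C : Matrix _ _ (Polynomial K))).det, ?_, fun t => ?_⟩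
  · simpa using Polynomial.natDegree_det_X_add_C_le M 1
  · have heval : (Polynomial.evalRingHom t).mapMatrix
        ((Polynomial.X : Polynomial K) • M.map Polynomial.C +
          (1 : Matrix _ _ K).map Polynomial.C) = 1 + t • M := by
      ext i j
      by_cases h : i = j <;> simp [h, add_comm, mul_comm t]
    have hmatrix : LinearMap.toMatrix b b (1 + t • f) = 1 + t • M := by simp [M]
    rw [← Polynomial.coe_evalRingHom, RingHom.map_det, heval, ← hmatrix, LinearMap.det_toMatrix]

theorem exists_finset_weights_eval_eq_sum {K : Type*} [Field K] {s : Set K} (hs : s.Infinite)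
    (n : ℕ) (x : K) :
    ∃ (T : Finset K) (c : K → K), ↑T ⊆ s ∧
      ∀ q : Polynomial K, q.natDegree ≤ n → q.eval x = ∑ t ∈ T, q.eval t * c t := by
  classical
  obtain ⟨T, hTs, hcard⟩ := hs.exists_subset_card_eq (n + 1)
  refine ⟨T, fun t => (Lagrange.basis T id t).eval x, hTs, fun q hq => ?_⟩
  have hdeg : q.degree < T.card := by
    rw [hcard]
    exact Polynomial.degree_le_natDegree.trans_lt (Nat.cast_lt.2 (Nat.lt_succ_of_le hq))
  conv_lhs => rw [Lagrange.eq_interpolate (v := id) Function.injective_id.injOn hdeg]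
  simp only [Lagrange.interpolate_apply, Polynomial.eval_finsetSum, Polynomial.eval_mul,
    Polynomial.eval_C, id]

variable {E : Type*} [NormedAddCommGroup E] [NormedSpace ℝ E] [FiniteDimensional ℝ E]

theorem integral_det_one_add_eq_of_forall_Ioo {X : Type*} [MeasurableSpace X] {μ : Measure X}
    {D : X → E →L[ℝ] E} (hint : ∀ t : ℝ, Integrable (fun x => (1 + t • D x).det) μ)
    {δ c : ℝ} (hδ : 0 < δ) (hc : ∀ t ∈ Ioo 0 δ, ∫ x, (1 + t • D x).det ∂μ = c) :
    ∫ x, (1 + D x).det ∂μ = c := by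
  obtain ⟨T, w, hT, hw⟩ :=
    exists_finset_weights_eval_eq_sum (Ioo_infinite hδ) (Module.finrank ℝ E) 1
  have hsum : ∑ t ∈ T, w t = 1 := by simpa using (hw 1 (by simp)).symm
  have hdet (L : E →L[ℝ] E) : (1 + L).det = ∑ t ∈ T, (1 + t • L).det * w t := by
    obtain ⟨q, hqdeg, hq⟩ := exists_polynomial_eval_eq_det_one_add_smul (L : E →ₗ[ℝ] E)
    have heval (t : ℝ) : q.eval t = (1 + t • L).det := hq t
    simpa only [heval, one_smul] using hw q hqdeg
  calc ∫ x, (1 + D x).det ∂μ = ∑ t ∈ T, (∫ x, (1 + t • D x).det ∂μ) * w t := by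
        simp only [← integral_mul_const]
        rw [← integral_finsetSum T fun t _ => (hint t).mul_const (w t)]
        exact integral_congr_ae (.of_forall fun x => hdet (D x))
    _ = ∑ t ∈ T, c * w t := Finset.sum_congr rfl fun t ht => by rw [hc t (hT ht)]
    _ = c := by rw [← Finset.mul_sum, hsum, mul_one]

theorem det_one_add_pos_of_norm_lt_one {L : E →L[ℝ] E} (hL : ‖L‖ < 1) : 0 < (1 + L).det := by
  have hne : ∀ t ∈ Icc (0 : ℝ) 1, (1 + t • L).det ≠ 0 := fun t ht => by
    have hnorm : ‖-(t • L)‖ < 1 := by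
      rw [norm_neg, norm_smul, Real.norm_of_nonneg ht.1]
      exact (mul_le_of_le_one_left (norm_nonneg _) ht.2).trans_lt hL
    have hunit := isUnit_one_sub_of_norm_lt_one hnorm
    rw [sub_neg_eq_add] at hunit
    exact ((hunit.map (ContinuousLinearMap.toLinearMapRingHom : (E →L[ℝ] E) →+* (E →ₗ[ℝ] E))).map
      (LinearMap.det : (E →ₗ[ℝ] E) →* ℝ)).ne_zero
  have hcont : ContinuousOn (fun t : ℝ => (1 + t • L).det) (Icc 0 1) :=
    (ContinuousLinearMap.continuous_det.comp (by fun_prop)).continuousOn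
  have hzero : (1 + (0 : ℝ) • L).det = 1 := by
    rw [zero_smul, add_zero]
    exact LinearMap.det_id
  by_contra! hle
  obtain ⟨t, ht, ht0⟩ := intermediate_value_Icc' zero_le_one hcont
    (show (0 : ℝ) ∈ Icc _ _ from ⟨by simpa using hle, hzero ▸ zero_le_one⟩)
  exact hne t ht ht0

end Determinant

section Volume

theorem bijective_add_of_lipschitzWith {E : Type*} [NormedAddCommGroup E] [CompleteSpace E]
    {h : E → E} {K : NNReal} (hK : K < 1) (hh : LipschitzWith K h) :
    Function.Bijective fun x => x + h x := by
  have hcontr (y : E) : ContractingWith K fun x => y - h x :=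
    ⟨hK, LipschitzWith.of_dist_le_mul fun a b => by
      rw [dist_sub_left]; exact hh.dist_le_mul a b⟩
  refine ⟨?_, fun y => ⟨(hcontr y).fixedPoint, ?_⟩⟩
  · exact (AntilipschitzWith.id.add_lipschitzWith hh (by simpa using hK)).injective
  · exact (sub_eq_iff_eq_add.1 (hcontr y).fixedPoint_isFixedPt).symm

theorem setIntegral_det_one_add_fderiv_eq_measureReal {E : Type*} [NormedAddCommGroup E]
    [NormedSpace ℝ E] [FiniteDimensional ℝ E] [MeasurableSpace E] [BorelSpace E]
    {μ : Measure E} [μ.IsAddHaarMeasure] {h : E → E} {h' : E → E →L[ℝ] E} {K : NNReal}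
    (hK : K < 1) (hh : LipschitzWith K h) (hderiv : ∀ x, HasFDerivAt h (h' x) x) {s : Set E}
    (hs : MeasurableSet s) (himage : (fun x => x + h x) '' s = s) :
    ∫ x in s, (1 + h' x).det ∂μ = μ.real s := by
  have hpos (x : E) : 0 < (1 + h' x).det :=
    det_one_add_pos_of_norm_lt_one (((hderiv x).le_of_lipschitz hh).trans_lt hK)
  have hchange := integral_image_eq_integral_abs_det_fderiv_smul μ hs
    (fun x _ => ((hasFDerivAt_id x).add (hderiv x)).hasFDerivWithinAt)
    (bijective_add_of_lipschitzWith hK hh).1.injOn (fun _ => (1 : ℝ))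
  have himage' : (id + h) '' s = s := himage
  rw [himage', setIntegral_const, smul_eq_mul, mul_one] at hchange
  rw [hchange]
  refine integral_congr_ae (.of_forall fun x => ?_)
  change (1 + h' x).det = |(1 + h' x).det| • (1 : ℝ)
  rw [abs_of_pos (hpos x), smul_eq_mul, mul_one]

end Volume

section NoRetraction

variable {E : Type*} [NormedAddCommGroup E]

theorem image_closedBall_add_smul_sub_of_norm_eq [NormedSpace ℝ E] {r : E → E} {R t : ℝ}
    (hR : 0 < R) (hsphere : ∀ x, ‖r x‖ = R) (hradial : ∀ x, R < ‖x‖ → r x = (R / ‖x‖) • x)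
    (ht : t ∈ Ioo 0 1) (hsurj : Function.Surjective fun x => x + t • (r x - x)) :
    (fun x => x + t • (r x - x)) '' closedBall 0 R = closedBall 0 R := by
  obtain ⟨ht0, ht1⟩ := ht
  have hconvex (x : E) : x + t • (r x - x) = (1 - t) • x + t • r x := by module
  refine Subset.antisymm (image_subset_iff.2 fun x hx => ?_) fun y hy => ?_
  · simp only [mem_preimage, hconvex]
    exact convex_closedBall 0 R hx (by simp [hsphere x]) (by linarith) ht0.le (by ring)
  · obtain ⟨x, rfl⟩ := hsurj y
    refine ⟨x, ?_, rfl⟩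
    by_contra! hx
    rw [mem_closedBall_zero_iff, not_le] at hx
    have hx0 : 0 < ‖x‖ := hR.trans hx
    have hnorm : ‖x + t • (r x - x)‖ = (1 - t) * ‖x‖ + t * R := by
      rw [hconvex, hradial x hx, smul_smul, ← add_smul, norm_smul,
        Real.norm_of_nonneg (add_nonneg (by linarith) (by positivity)), add_mul]
      field_simp
    rw [mem_closedBall_zero_iff, hnorm] at hy
    nlinarith

variable [InnerProductSpace ℝ E] [FiniteDimensional ℝ E]

theorem det_fderiv_eq_zero_of_norm_eq {r : E → E} {r' : E →L[ℝ] E} {x : E}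
    {R : ℝ} (hR : R ≠ 0) (hr : HasFDerivAt r r' x) (hsphere : ∀ y, ‖r y‖ = R) :
    r'.det = 0 := by
  by_contra hne
  obtain ⟨v, hv⟩ : r x ∈ range r' :=
    ((Module.End.isUnit_iff _).1 ((LinearMap.isUnit_iff_isUnit_det _).2
      (isUnit_iff_ne_zero.2 hne))).2 (r x)
  have hconst : HasFDerivAt (fun y => ‖r y‖ ^ 2) (0 : E →L[ℝ] ℝ) x := by
    simpa only [hsphere] using hasFDerivAt_const (R ^ 2) x
  have hinner : inner ℝ (r x) (r' v) = 0 := by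
    simpa using congrArg (fun l : E →L[ℝ] ℝ => l v) (hr.norm_sq.unique hconst)
  rw [hv, real_inner_self_eq_norm_sq, hsphere] at hinner
  exact hR (pow_eq_zero_iff two_ne_zero |>.1 hinner)

-- The integral of the Jacobian of `x ↦ x + t • (r x - x)` over the ball is polynomial in `t`. For
-- small `t` it is the volume of the ball, while at `t = 1` the integrand vanishes.
theorem not_lipschitzWith_contDiff_retraction_sphere {r : E → E} {R : ℝ} (hR : 0 < R)
    (hr : ContDiff ℝ 1 r) {K : NNReal} (hK : LipschitzWith K r) (hsphere : ∀ x, ‖r x‖ = R)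
    (hradial : ∀ x, R < ‖x‖ → r x = (R / ‖x‖) • x) : False := by
  borelize E
  let μ : Measure E := Measure.addHaar
  have hderiv (x : E) : HasFDerivAt r (fderiv ℝ r x) x :=
    (hr.differentiable one_ne_zero x).hasFDerivAt
  have hint (t : ℝ) :
      IntegrableOn (fun x => (1 + t • (fderiv ℝ r x - 1)).det) (closedBall 0 R) μ := by
    have := hr.continuous_fderiv one_ne_zero
    exact (ContinuousLinearMap.continuous_det.comp (by fun_prop)).continuousOn.integrableOn_compact
      (isCompact_closedBall 0 R)
  have hsmall : ∀ t ∈ Ioo 0 (K + 1 + 1 : ℝ)⁻¹,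
      ∫ x in closedBall 0 R, (1 + t • (fderiv ℝ r x - 1)).det ∂μ = μ.real (closedBall 0 R) := by
    rintro t ⟨ht0, htK⟩
    have htK' : t * (K + 1 + 1) < 1 := by rwa [← lt_inv_mul_iff₀' (by positivity), mul_one]
    have hlt : ‖t‖₊ * (K + 1) < 1 := by
      rw [← NNReal.coe_lt_coe]
      push_cast
      rw [Real.norm_of_nonneg ht0.le]
      linarith
    have hLip : LipschitzWith (‖t‖₊ * (K + 1)) fun x => t • (r x - x) :=
      (lipschitzWith_smul t).comp (hK.sub LipschitzWith.id)
    refine setIntegral_det_one_add_fderiv_eq_measureReal hlt hLip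
      (fun x => ((hderiv x).sub (hasFDerivAt_id x)).const_smul t) measurableSet_closedBall ?_
    exact image_closedBall_add_smul_sub_of_norm_eq hR hsphere hradial
      ⟨ht0, by nlinarith [K.coe_nonneg]⟩ (bijective_add_of_lipschitzWith hlt hLip).2
  have hvolume : ∫ x in closedBall 0 R, (1 + (fderiv ℝ r x - 1)).det ∂μ =
      μ.real (closedBall 0 R) :=
    integral_det_one_add_eq_of_forall_Ioo hint (by positivity) hsmall
  simp only [add_sub_cancel, det_fderiv_eq_zero_of_norm_eq hR.ne' (hderiv _) hsphere,
    integral_zero] at hvolume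
  exact (ENNReal.toReal_pos (measure_closedBall_pos μ 0 hR).ne'
    measure_closedBall_lt_top.ne).ne hvolume

end NoRetraction

section FixedPoint

theorem lipschitzOnWith_inv_norm_smul {E : Type*} [NormedAddCommGroup E] [NormedSpace ℝ E]
    {ε : NNReal} (hε : 0 < ε) :
    LipschitzOnWith (2 / ε) (fun x : E => ‖x‖⁻¹ • x) {x | ε ≤ ‖x‖} := by
  refine LipschitzOnWith.of_dist_le_mul fun x hx y hy => ?_
  have hx0 : 0 < ‖x‖ := (NNReal.coe_pos.2 hε).trans_le hx
  have hy0 : 0 < ‖y‖ := (NNReal.coe_pos.2 hε).trans_le hy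
  have hsplit : ‖x‖⁻¹ • x - ‖y‖⁻¹ • y = ‖x‖⁻¹ • ((x - y) + ((‖y‖ - ‖x‖) / ‖y‖) • y) := by
    match_scalars <;> field_simp
    ring
  have hradial : ‖((‖y‖ - ‖x‖) / ‖y‖) • y‖ ≤ ‖x - y‖ := by
    rw [norm_smul, norm_div, norm_norm, div_mul_cancel₀ _ hy0.ne', norm_sub_rev x]
    exact abs_norm_sub_norm_le y x
  calc dist (‖x‖⁻¹ • x) (‖y‖⁻¹ • y)
      = ‖x‖⁻¹ * ‖(x - y) + ((‖y‖ - ‖x‖) / ‖y‖) • y‖ := by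
        rw [dist_eq_norm, hsplit, norm_smul, norm_inv, norm_norm]
    _ ≤ (ε : ℝ)⁻¹ * (‖x - y‖ + ‖x - y‖) := by
        gcongr
        · exact hx
        · exact norm_add_le_of_le le_rfl hradial
    _ = (2 / ε : NNReal) * dist x y := by
        rw [dist_eq_norm]
        push_cast
        ring

variable {E : Type*} [NormedAddCommGroup E] [InnerProductSpace ℝ E] [FiniteDimensional ℝ E]

theorem exists_eq_zero_of_contDiff_of_eq_self_outside {H : E → E} {R : ℝ} (hR : 0 < R)
    (hH : ContDiff ℝ 1 H) (hself : ∀ x, R ≤ ‖x‖ → H x = x) : ∃ x, H x = 0 := by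
  by_contra! hne
  obtain ⟨δ, hδ, hδH⟩ := (isCompact_closedBall (0 : E) R).exists_forall_le'
    hH.continuous.norm.continuousOn fun x _ => norm_pos_iff.2 (hne x)
  have hbelow (x : E) : min δ R ≤ ‖H x‖ := by
    by_cases hx : R ≤ ‖x‖
    · rw [hself x hx]
      exact (min_le_right _ _).trans hx
    · exact (min_le_left _ _).trans (hδH x (mem_closedBall_zero_iff.2 (not_le.1 hx).le))
  obtain ⟨K, hK⟩ : ∃ K, LipschitzWith K H := by
    have hsupp : HasCompactSupport fun x => H x - x :=
      .of_support_subset_isCompact (isCompact_closedBall 0 R) fun x hx => by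
        by_contra h
        rw [mem_closedBall_zero_iff, not_le] at h
        exact hx (by simp [hself x h.le])
    obtain ⟨C, hC⟩ := (hH.sub contDiff_id).lipschitzWith_of_hasCompactSupport hsupp one_ne_zero
    exact ⟨C + 1, by simpa using hC.add LipschitzWith.id⟩
  let ε : NNReal := ⟨min δ R, (lt_min hδ hR).le⟩
  have hε : 0 < ε := NNReal.coe_pos.1 (lt_min hδ hR)
  have hnormalize : LipschitzWith (2 / ε * K) fun x => ‖H x‖⁻¹ • H x :=
    lipschitzOnWith_univ.1 <| (lipschitzOnWith_inv_norm_smul hε).comp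
      (lipschitzOnWith_univ.2 hK) fun x _ => hbelow x
  have hsmooth : ContDiff ℝ 1 fun x => R • ‖H x‖⁻¹ • H x :=
    (((hH.norm ℝ hne).inv fun x => norm_ne_zero_iff.2 (hne x)).smul hH).const_smul R
  refine not_lipschitzWith_contDiff_retraction_sphere hR hsmooth
    ((lipschitzWith_smul R).comp hnormalize) (fun x => ?_) fun x hx => ?_
  · rw [norm_smul, norm_smul, norm_inv, norm_norm, inv_mul_cancel₀ (norm_ne_zero_iff.2 (hne x)),
      mul_one, Real.norm_of_nonneg hR.le]
  · rw [hself x hx.le, smul_smul, div_eq_mul_inv]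

theorem exists_fixedPoint_of_norm_le {F : E → E} (hF : Continuous F) {M : ℝ}
    (hM : ∀ x, ‖F x‖ ≤ M) : ∃ x, F x = x := by
  by_contra! hne
  have hM0 : 0 ≤ M := (norm_nonneg _).trans (hM 0)
  obtain ⟨ε, hε, hεF⟩ := (isCompact_closedBall (0 : E) (M + 2)).exists_forall_le'
    (hF.sub continuous_id).norm.continuousOn fun x _ => norm_pos_iff.2 (sub_ne_zero.2 (hne x))
  obtain ⟨g, hg, hgF, -⟩ := hF.exists_contDiff_approx 1 (ε := fun _ => min ε 1) continuous_const
    fun _ => lt_min hε one_pos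
  let χ : ContDiffBump (0 : E) := ⟨M + 2, M + 3, by linarith, by linarith⟩
  obtain ⟨x, hx⟩ : ∃ x, x - χ x • g x = 0 :=
    exists_eq_zero_of_contDiff_of_eq_self_outside (R := M + 3) (by linarith)
      (contDiff_id.sub (χ.contDiff.smul hg)) fun x hx => by
        rw [χ.zero_of_le_dist (by simpa using hx)]
        simp
  have hx : χ x • g x = x := (sub_eq_zero.1 hx).symm
  have hgx : ‖g x - F x‖ < min ε 1 := by simpa only [dist_eq_norm] using hgF x
  have hxM : ‖x‖ ≤ M + 2 := calc
    ‖x‖ = χ x * ‖g x‖ := by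
      rw [← Real.norm_of_nonneg (χ.nonneg (x := x)), ← norm_smul, hx]
    _ ≤ ‖g x‖ := mul_le_of_le_one_left (norm_nonneg _) χ.le_one
    _ ≤ ‖F x‖ + ‖g x - F x‖ := norm_le_norm_add_norm_sub' _ _
    _ ≤ M + 2 := by linarith [hM x, min_le_right ε 1]
  have hgx_eq : g x = x := by
    rwa [χ.one_of_mem_closedBall (by simpa using hxM), one_smul] at hx
  rw [hgx_eq, norm_sub_rev] at hgx
  exact (hgx.trans_le (min_le_left _ _)).not_ge (hεF x (mem_closedBall_zero_iff.2 hxM))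

end FixedPoint

section AbsoluteRetract

universe u v

variable {V : Type u} {Y : Type v} [TopologicalSpace Y] [TietzeExtension.{u} Y] {i : Y → V}

theorem exists_continuous_leftInverse_of_isClosedEmbedding [TopologicalSpace V] [NormalSpace V]
    (hi : IsClosedEmbedding i) :
    ∃ ρ : C(V, Y), Function.LeftInverse ρ i := by
  obtain ⟨ρ, hρ⟩ := ContinuousMap.exists_extension hi (ContinuousMap.id Y)
  exact ⟨ρ, fun y => DFunLike.congr_fun hρ y⟩

variable [NormedAddCommGroup V] [NormedSpace ℝ V]

theorem exists_fixedPoint_of_isClosedEmbedding [FiniteDimensional ℝ V] [CompactSpace Y]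
    (hi : IsClosedEmbedding i) {T : Y → Y} (hT : Continuous T) : ∃ y, T y = y := by
  obtain ⟨ρ, hρ⟩ := exists_continuous_leftInverse_of_isClosedEmbedding hi
  let e := toEuclidean (E := V)
  have hcont : Continuous fun y => e (i y) := e.continuous.comp hi.continuous
  obtain ⟨M, hM⟩ := (isCompact_range hcont).isBounded.exists_norm_le
  obtain ⟨x, hx⟩ := exists_fixedPoint_of_norm_le
    (hcont.comp (hT.comp (ρ.continuous.comp e.symm.continuous))) fun x => hM _ ⟨_, rfl⟩
  refine ⟨ρ (e.symm x), ?_⟩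
  calc T (ρ (e.symm x)) = ρ (e.symm (e (i (T (ρ (e.symm x)))))) := by
        rw [e.symm_apply_apply, hρ]
    _ = ρ (e.symm x) := congrArg (fun y => ρ (e.symm y)) hx

theorem contractibleSpace_of_isClosedEmbedding (hi : IsClosedEmbedding i) :
    ContractibleSpace Y := by
  obtain ⟨ρ, hρ⟩ := exists_continuous_leftInverse_of_isClosedEmbedding hi
  rw [contractible_iff_id_nullhomotopic]
  have hid : ContinuousMap.id Y = ρ.comp ((ContinuousMap.id V).comp ⟨i, hi.continuous⟩) :=
    ContinuousMap.ext fun y => (hρ y).symm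
  rw [hid]
  exact ((id_nullhomotopic V).comp_left ⟨i, hi.continuous⟩).comp_right ρ

end AbsoluteRetract

section StableInvariance

theorem exists_eq_zero_of_norm_sub_le_one {E : Type*} [NormedAddCommGroup E] [NormedSpace ℝ E]
    [FiniteDimensional ℝ E] {h : closedBall (0 : E) 1 → E} (hh : Continuous h)
    (hbound : ∀ x : closedBall (0 : E) 1, ‖(x : E) - h x‖ ≤ 1) : ∃ x, h x = 0 := by
  obtain ⟨x, hx⟩ := exists_fixedPoint_of_isClosedEmbedding
    (isClosed_closedBall (x := (0 : E)) (ε := 1)).isClosedEmbedding_subtypeVal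
    (T := fun x => ⟨x - h x, mem_closedBall_zero_iff.2 (hbound x)⟩) (by fun_prop)
  exact ⟨x, by simpa using congrArg Subtype.val hx⟩

variable {E : Type*} [NormedAddCommGroup E] [NormedSpace ℝ E]

theorem exists_continuous_approx_ne_zero_on_sphere [FiniteDimensional ℝ E] {G : E → E}
    (hG : Continuous G) (c : E) {ε η : ℝ} (hε : ε ≠ 0) (hη : 0 < η) :
    ∃ P : E → E, Continuous P ∧ (∀ y, ‖P y - G y‖ < η) ∧ ∀ y ∈ sphere c ε, P y ≠ 0 := by
  borelize E
  let μ : Measure E := Measure.addHaar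
  obtain ⟨Q, hQ, hQG, -⟩ := hG.exists_contDiff_approx 1 (ε := fun _ => η / 2) continuous_const
    fun _ => half_pos hη
  simp only [dist_eq_norm] at hQG
  have hnull : μ (Q '' sphere c ε) = 0 :=
    addHaar_image_eq_zero_of_differentiableOn_of_addHaar_eq_zero μ
      (hQ.differentiable one_ne_zero).differentiableOn (Measure.addHaar_sphere_of_ne_zero μ c hε)
  obtain ⟨w, hw, hwQ⟩ : ∃ w ∈ ball (0 : E) (η / 2), w ∉ Q '' sphere c ε := by
    by_contra! hsub
    exact (measure_ball_pos μ 0 (half_pos hη)).ne' (measure_mono_null hsub hnull)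
  refine ⟨fun y => Q y - w, hQ.continuous.sub continuous_const, fun y => ?_, fun y hy h => ?_⟩
  · calc ‖Q y - w - G y‖ = ‖(Q y - G y) - w‖ := by rw [sub_right_comm]
      _ ≤ ‖Q y - G y‖ + ‖w‖ := norm_sub_le _ _
      _ < η := by linarith [hQG y, mem_ball_zero_iff.1 hw]
  · exact hwQ ⟨y, hy, sub_eq_zero.1 h⟩

/-- The radial push-out of `E \ {c}` onto the complement of `ball c ε`: points of the ball are moved
along rays from `c` to the sphere of radius `ε`, other points are fixed. At `y = c` it takes the
junk value `c`. -/
noncomputable def radialPushOut (c : E) (ε : ℝ) (y : E) : E :=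
  c + max (ε / ‖y - c‖) 1 • (y - c)

theorem continuousOn_radialPushOut (c : E) (ε : ℝ) : ContinuousOn (radialPushOut c ε) {c}ᶜ := by
  have hne : ∀ y ∈ ({c}ᶜ : Set E), ‖y - c‖ ≠ 0 := fun y hy => norm_ne_zero_iff.2 (sub_ne_zero.2 hy)
  have hdiv : ContinuousOn (fun y => ε / ‖y - c‖) {c}ᶜ :=
    continuousOn_const.div (by fun_prop) hne
  exact continuousOn_const.add ((hdiv.sup continuousOn_const).smul (by fun_prop))

theorem radialPushOut_of_le {c y : E} {ε : ℝ} (hε : 0 < ε) (hy : ε ≤ dist y c) :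
    radialPushOut c ε y = y := by
  rw [dist_eq_norm] at hy
  rw [radialPushOut, max_eq_right ((div_le_one (hε.trans_le hy)).2 hy), one_smul, add_sub_cancel]

theorem radialPushOut_mem_sphere {c y : E} {ε : ℝ} (hyc : y ≠ c) (hy : dist y c ≤ ε) :
    radialPushOut c ε y ∈ sphere c ε := by
  rw [dist_eq_norm] at hy
  have hpos : 0 < ‖y - c‖ := norm_pos_iff.2 (sub_ne_zero.2 hyc)
  rw [mem_sphere_iff_norm, radialPushOut, max_eq_left ((one_le_div hpos).2 hy),
    add_sub_cancel_left, norm_smul, norm_div, norm_norm, div_mul_cancel₀ _ hpos.ne',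
    Real.norm_of_nonneg (hpos.le.trans hy)]

variable [FiniteDimensional ℝ E]

-- If `φ` missed `c`, then `P ∘ radialPushOut c ε ∘ φ`, with `P` an approximation of `G` having no
-- zero on the sphere, would be a zero-free map close to the identity.
theorem mem_range_of_approx_leftInverse {φ : closedBall (0 : E) 1 → E} (hφ : Continuous φ)
    {G : E → E} (hG : Continuous G) {c : E} {ε η : ℝ} (hε : 0 < ε) (hη : η ≤ 1 / 2)
    (hGc : ∀ y ∈ closedBall c ε, ‖G y‖ ≤ 1 / 4)
    (hGφ : ∀ x : closedBall (0 : E) 1, ‖(x : E) - G (φ x)‖ < η / 2)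
    (hφc : ∀ x : closedBall (0 : E) 1, ε ≤ dist (φ x) c → η ≤ ‖(x : E)‖) : c ∈ range φ := by
  by_contra! hc
  have hc (x) : φ x ≠ c := fun h => hc ⟨x, h⟩
  have hη0 : 0 < η / 2 := (norm_nonneg _).trans_lt (hGφ ⟨0, by simp⟩)
  obtain ⟨P, hP, hPG, hPsphere⟩ := exists_continuous_approx_ne_zero_on_sphere hG c hε.ne' hη0
  let Ψ x := radialPushOut c ε (φ x)
  have hΨ : Continuous Ψ := (continuousOn_radialPushOut c ε).comp_continuous hφ hc
  have hGΨ (x) : ‖G (φ x) - G (Ψ x)‖ ≤ 1 / 2 := by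
    rcases le_total ε (dist (φ x) c) with hfar | hnear
    · simp [Ψ, radialPushOut_of_le hε hfar]
    · calc ‖G (φ x) - G (Ψ x)‖ ≤ ‖G (φ x)‖ + ‖G (Ψ x)‖ := norm_sub_le _ _
        _ ≤ 1 / 4 + 1 / 4 := add_le_add (hGc _ hnear)
          (hGc _ (sphere_subset_closedBall (radialPushOut_mem_sphere (hc x) hnear)))
        _ = 1 / 2 := by norm_num
  obtain ⟨x, hx⟩ := exists_eq_zero_of_norm_sub_le_one (hP.comp hΨ) fun x => calc
    ‖(x : E) - P (Ψ x)‖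
      = ‖(x - G (φ x)) + (G (φ x) - G (Ψ x)) - (P (Ψ x) - G (Ψ x))‖ := by congr 1; abel
    _ ≤ ‖(x : E) - G (φ x)‖ + ‖G (φ x) - G (Ψ x)‖ + ‖P (Ψ x) - G (Ψ x)‖ :=
      (norm_sub_le _ _).trans (by gcongr; exact norm_add_le _ _)
    _ ≤ 1 := by linarith [hGφ x, hGΨ x, hPG (Ψ x)]
  have hfar : ε ≤ dist (φ x) c := by
    by_contra! hnear
    exact hPsphere _ (radialPushOut_mem_sphere (hc x) hnear.le) hx
  have hPx : ‖0 - G (φ x)‖ < η / 2 := by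
    have hΨx : Ψ x = φ x := radialPushOut_of_le hε hfar
    simpa only [← hx, Function.comp_apply, hΨx] using hPG (Ψ x)
  rw [zero_sub, norm_neg] at hPx
  linarith [hφc x hfar, hGφ x, norm_sub_norm_le (x : E) (G (φ x))]

theorem exists_eventually_mem_range_of_injective {φ₀ : C(closedBall (0 : E) 1, E)}
    (hφ₀ : Function.Injective φ₀) :
    ∃ c, ∀ᶠ φ : C(closedBall (0 : E) 1, E) in 𝓝 φ₀, c ∈ range φ := by
  let incl : C(closedBall (0 : E) 1, E) := ⟨Subtype.val, continuous_subtype_val⟩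
  obtain ⟨G, hG⟩ : ∃ G : C(E, E), G.comp φ₀ = incl :=
    ContinuousMap.exists_extension (φ₀.continuous.isClosedEmbedding hφ₀) incl
  let o : closedBall (0 : E) 1 := ⟨0, by simp⟩
  have hGo : G (φ₀ o) = 0 := DFunLike.congr_fun hG o
  obtain ⟨ε, hε, hGε⟩ : ∃ ε > 0, ∀ y ∈ closedBall (φ₀ o) ε, ‖G y‖ ≤ 1 / 4 := by
    refine nhds_basis_closedBall.eventually_iff.1 ?_
    refine G.continuous.norm.continuousAt.eventually (Iic_mem_nhds ?_)
    simp [hGo]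
  obtain ⟨η, hη, hη_le, hφη⟩ : ∃ η > 0, η ≤ 1 / 2 ∧
      ∀ x : closedBall (0 : E) 1, ‖(x : E)‖ < η → dist (φ₀ x) (φ₀ o) < ε / 2 := by
    obtain ⟨η, hη, h⟩ := Metric.continuous_iff.1 φ₀.continuous o (ε / 2) (half_pos hε)
    refine ⟨min η (1 / 2), by positivity, min_le_right _ _, fun x hx => h x ?_⟩
    rw [Subtype.dist_eq, dist_zero_right]
    exact hx.trans_le (min_le_left _ _)
  refine ⟨φ₀ o, ?_⟩
  have hGφ : ∀ᶠ φ in 𝓝 φ₀, dist (G.comp φ) (G.comp φ₀) < η / 2 :=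
    Metric.tendsto_nhds.1 ((ContinuousMap.continuous_postcomp G).tendsto φ₀) _ (half_pos hη)
  filter_upwards [hGφ, ball_mem_nhds φ₀ (half_pos hε)] with φ hGφ hφ
  refine mem_range_of_approx_leftInverse φ.continuous G.continuous hε hη_le hGε (fun x => ?_)
    fun x hx => ?_
  · rw [hG, dist_comm] at hGφ
    rw [← dist_eq_norm]
    exact (ContinuousMap.dist_apply_le_dist x).trans_lt hGφ
  · by_contra! hxη
    have hφx : dist (φ x) (φ₀ x) < ε / 2 := (ContinuousMap.dist_apply_le_dist x).trans_lt hφ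
    linarith [dist_triangle (φ x) (φ₀ x) (φ₀ o), hφη x hxη]

theorem exists_eventually_mem_range_of_homeomorph_closedBall {A : Type*} [TopologicalSpace A]
    (e : A ≃ₜ closedBall (0 : E) 1) {φ₀ : C(A, E)} (hφ₀ : Function.Injective φ₀) :
    ∃ c, ∀ᶠ φ : C(A, E) in 𝓝 φ₀, c ∈ range φ := by
  let k : C(closedBall (0 : E) 1, A) := e.symm
  obtain ⟨c, hc⟩ := exists_eventually_mem_range_of_injective (φ₀ := φ₀.comp k)
    (hφ₀.comp e.symm.injective)
  exact ⟨c, ((ContinuousMap.continuous_precomp k).continuousAt.eventually hc).mono fun φ hφ =>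
    range_comp_subset_range _ _ hφ⟩

end StableInvariance

section Sheets

variable {X Y B ι : Type*} [TopologicalSpace X] [TopologicalSpace B]

/-- The maps `q i` are disjoint continuous sections of `p` over `b` whose images exhaust everything
lying over `b`: they trivialise the pullback of `p` along `b`. With `b = id` they are global
sections of `p`; with `b v = (v, s)` they trivialise `p` over one level of a product. -/
structure IsSheetsOver (p : X → Y) (b : B → Y) (q : ι → B → X) : Prop where
  continuous (i : ι) : Continuous (q i)
  apply_eq (i : ι) (v : B) : p (q i v) = b v
  injective (v : B) : Function.Injective fun i => q i v
  exists_eq {x : X} {v : B} (h : p x = b v) : ∃ i, q i v = x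

theorem IsSheetsOver.nonempty_fiber_equiv {p : X → Y} {b : B → Y} {q : ι → B → X}
    (hq : IsSheetsOver p b q) (v : B) : Nonempty (p ⁻¹' {b v} ≃ ι) :=
  ⟨(Equiv.ofBijective (fun i => ⟨q i v, hq.apply_eq i v⟩)
    ⟨fun _ _ h => hq.injective v (congrArg Subtype.val h),
      fun x => (hq.exists_eq x.2).imp fun _ h => Subtype.ext h⟩).symm⟩

theorem IsSheetsOver.exists_continuous_index [T2Space X] [CompactSpace B] [Finite ι]
    [TopologicalSpace ι] [DiscreteTopology ι] {p : X → B} {q : ι → B → X}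
    (hq : IsSheetsOver p id q) : ∃ ℓ : X → ι, Continuous ℓ ∧ ∀ i v, ℓ (q i v) = i := by
  choose ℓ hℓ using fun x => hq.exists_eq (x := x) rfl
  have hℓq (i) (v : B) : ℓ (q i v) = i :=
    hq.injective v (by simpa only [hq.apply_eq, id] using hℓ (q i v))
  have hpreimage (C : Set ι) : ℓ ⁻¹' C = ⋃ i ∈ C, range (q i) := by
    ext x
    simp only [mem_preimage, mem_iUnion₂]
    exact ⟨fun hx => ⟨ℓ x, hx, _, hℓ x⟩, by rintro ⟨i, hi, v, rfl⟩; rwa [hℓq]⟩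
  refine ⟨ℓ, continuous_iff_isClosed.2 fun C _ => ?_, hℓq⟩
  rw [hpreimage]
  exact C.toFinite.isClosed_biUnion fun i _ => (isCompact_range (hq.continuous i)).isClosed

end Sheets

section Covering

variable {X Y ι : Type*} [TopologicalSpace X] [TopologicalSpace Y]

theorem isOpenMap_of_locally_injOn_of_fiber_equiv [CompactSpace X] [T2Space Y] [Finite ι]
    {p : X → Y} (hp : Continuous p) (hfiber : ∀ y, Nonempty (p ⁻¹' {y} ≃ ι))
    (hinj : ∀ x, ∃ U ∈ 𝓝 x, InjOn p U) : IsOpenMap p := by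
  refine isOpenMap_iff_nhds_le.2 fun z W hW => ?_
  obtain ⟨W', hW'W, hW'o, hzW'⟩ := mem_nhds_iff.1 (Filter.mem_map.1 hW)
  have hU (x : X) : ∃ U, IsOpen U ∧ x ∈ U ∧ InjOn p U ∧ (x = z → U ⊆ W') := by
    obtain ⟨U, hU, hUinj⟩ := hinj x
    obtain ⟨V, hVU, hVo, hxV⟩ := mem_nhds_iff.1 hU
    by_cases hx : x = z
    · exact ⟨V ∩ W', hVo.inter hW'o, ⟨hxV, hx ▸ hzW'⟩,
        hUinj.mono (inter_subset_left.trans hVU), fun _ => inter_subset_right⟩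
    · exact ⟨V, hVo, hxV, hUinj.mono hVU, fun h => absurd h hx⟩
  choose U hUo hxU hUinj hUz using hU
  have hcover : ∀ᶠ y in 𝓝 (p z), ∀ x', p x' = y → ∃ x : p ⁻¹' {p z}, x' ∈ U x := by
    have hclosed : IsClosed (p '' (⋃ x : p ⁻¹' {p z}, U x)ᶜ) :=
      (isOpen_iUnion fun x : p ⁻¹' {p z} => hUo x).isClosed_compl.isCompact.image hp |>.isClosed
    filter_upwards [hclosed.isOpen_compl.mem_nhds fun ⟨x, hx, hxz⟩ =>
      hx (mem_iUnion.2 ⟨⟨x, hxz⟩, hxU x⟩)] with y hy x' hx'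
    by_contra hx
    exact hy ⟨x', fun h => hx (mem_iUnion.1 h), hx'⟩
  filter_upwards [hcover] with y hy
  choose k hk using fun x' : p ⁻¹' {y} => hy x' x'.2
  have hkinj : Function.Injective k := fun a b hab =>
    Subtype.ext (hUinj (k a) (hk a) (hab ▸ hk b) (a.2.trans b.2.symm))
  obtain ⟨ey⟩ := hfiber y
  obtain ⟨ez⟩ := hfiber (p z)
  have : Finite (p ⁻¹' {y}) := .of_equiv ι ey.symm
  obtain ⟨x', hx'⟩ :=
    (Finite.injective_iff_surjective_of_equiv (ey.trans ez.symm)).1 hkinj ⟨z, rfl⟩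
  have hx'W : (x' : X) ∈ p ⁻¹' W := hW'W (hUz _ (congrArg Subtype.val hx') (hk x'))
  rwa [mem_preimage, show p x' = y from x'.2] at hx'W

theorem isCoveringMap_of_locally_injOn_of_fiber_equiv [CompactSpace X] [T2Space X] [T2Space Y]
    [Finite ι] {p : X → Y} (hp : Continuous p) (hfiber : ∀ y, Nonempty (p ⁻¹' {y} ≃ ι))
    (hinj : ∀ x, ∃ U ∈ 𝓝 x, InjOn p U) : IsCoveringMap p := by
  have hopen := isOpenMap_of_locally_injOn_of_fiber_equiv hp hfiber hinj
  refine isLocalHomeomorph_iff_isCoveringMap.1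
    (isLocalHomeomorph_iff_isOpenEmbedding_restrict.2 fun x => ?_)
  obtain ⟨U, hU, hUinj⟩ := hinj x
  obtain ⟨V, hVU, hVo, hxV⟩ := mem_nhds_iff.1 hU
  exact ⟨V, hVo.mem_nhds hxV, .of_continuous_injective_isOpenMap
    (hp.comp continuous_subtype_val) (injOn_iff_injective.1 (hUinj.mono hVU))
    (hopen.comp hVo.isOpenMap_subtype_val)⟩

theorem exists_isSheetsOver_id_of_isCoveringMap [ContractibleSpace Y] [Finite ι] {p : X → Y}
    (hp : IsCoveringMap p) (hfiber : ∀ y, Nonempty (p ⁻¹' {y} ≃ ι)) :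
    ∃ σ : ι → Y → X, IsSheetsOver p id σ := by
  obtain ⟨y₀, ⟨H⟩⟩ := id_nullhomotopic Y
  obtain ⟨e₀⟩ := hfiber y₀
  have hstart (i : ι) (y : Y) :
      H.symm.toContinuousMap (0, y) = p (ContinuousMap.const Y (e₀.symm i : X) y) := by
    simpa using (e₀.symm i).2.symm
  let Γ i := hp.liftHomotopy H.symm.toContinuousMap (.const Y (e₀.symm i : X)) (hstart i)
  have hΓ (i) : p ∘ Γ i = H.symm.toContinuousMap := hp.liftHomotopy_lifts ..
  have hΓ₀ (i) (y) : Γ i (0, y) = e₀.symm i := hp.liftHomotopy_zero ..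
  have hsection (i) (y) : p (Γ i (1, y)) = y := by simpa using congrFun (hΓ i) (1, y)
  have hinj (y) : Function.Injective fun i => Γ i (1, y) := fun i j h => by
    have hΓij := hp.eq_of_comp_eq (Γ i).continuous (Γ j).continuous ((hΓ i).trans (hΓ j).symm) _ h
    exact e₀.symm.injective (Subtype.ext (by rw [← hΓ₀ i y, hΓij, hΓ₀]))
  refine ⟨fun i y => Γ i (1, y), fun i => by fun_prop, hsection, hinj, fun {x y} hxy => ?_⟩
  obtain ⟨e⟩ := hfiber y
  let k (i : ι) : p ⁻¹' {y} := ⟨Γ i (1, y), hsection i y⟩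
  have hk : Function.Surjective k := (Finite.injective_iff_surjective_of_equiv e.symm).1
    fun i j h => hinj y (congrArg Subtype.val h)
  exact (hk ⟨x, hxy⟩).imp fun _ => congrArg Subtype.val

end Covering

section LevelSheets

theorem exists_forall_le_dist_of_ne {A M ι : Type*} [TopologicalSpace A] [CompactSpace A]
    [MetricSpace M] [Finite ι] {g : ι → A → M} (hg : ∀ i, Continuous (g i))
    (hinj : ∀ v, Function.Injective fun i => g i v) (j : ι) :
    ∃ a > 0, ∀ i ≠ j, ∀ v, a ≤ dist (g i v) (g j v) := by
  have hgap (i : ι) : ∃ a > 0, i ≠ j → ∀ v, a ≤ dist (g i v) (g j v) := by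
    by_cases hij : i = j
    · exact ⟨1, one_pos, fun h => absurd hij h⟩
    · obtain ⟨a, ha, hle⟩ := isCompact_univ.exists_forall_le'
        ((hg i).dist (hg j)).continuousOn fun v _ => dist_pos.2 fun h => hij (hinj v h)
      exact ⟨a, ha, fun _ v => hle v (mem_univ v)⟩
  choose a ha hle using hgap
  obtain ⟨a₀, ha₀, ha₀le⟩ : ∃ a₀ > 0, ∀ i, a₀ ≤ a i := by
    have : Nonempty ι := ⟨j⟩
    obtain ⟨i₀, hi₀⟩ := Finite.exists_min a
    exact ⟨a i₀, ha i₀, hi₀⟩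
  exact ⟨a₀, ha₀, fun i hij v => (ha₀le i).trans (hle i hij v)⟩

variable {X A S E ι : Type*} [TopologicalSpace X] [CompactSpace X] [TopologicalSpace A]
  [TopologicalSpace S] [T2Space S]

-- The values of `r` on the closed set `{d = η}` stay away from `r z`, and a connected sheet
-- starting in `{d < η}` can only leave it through `{d = η}`.
theorem eventually_forall_lt_of_ne_on_fiber [PreconnectedSpace A] {r : X → S} {d : X → ℝ}
    (hr : Continuous r) (hd : Continuous d) {z : X} {η : ℝ} (hz : d z < η)
    (hne : ∀ x, r x = r z → d x ≠ η) :
    ∀ᶠ x in 𝓝 z, ∀ g : A → X, Continuous g → (∀ v, r (g v) = r x) → x ∈ range g →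
      ∀ v, d (g v) < η := by
  have hclosed : IsClosed (r '' {x | d x = η}) :=
    ((isClosed_eq hd continuous_const).isCompact.image hr).isClosed
  have hnear : ∀ᶠ x in 𝓝 z, r x ∉ r '' {x | d x = η} :=
    hr.continuousAt (hclosed.isOpen_compl.mem_nhds fun ⟨x, hx, hxz⟩ => hne x hxz hx)
  filter_upwards [hnear, hd.continuousAt.eventually (Iio_mem_nhds hz)]
  rintro _ hx hdx g hg hrg ⟨w, rfl⟩ v
  by_contra! hv
  obtain ⟨v', hv'⟩ := mem_range_of_exists_le_of_exists_ge (hd.comp hg) ⟨w, hdx.le⟩ ⟨v, hv⟩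
  exact hx ⟨g v', hv', hrg v'⟩

variable [NormedAddCommGroup E] [NormedSpace ℝ E] [FiniteDimensional ℝ E] [Finite ι] {u : X → E}
  {p : X → A × S}

-- A gap separates the sheet `q j` through `z` from the others at its level, so a sheet through a
-- point near `z` stays uniformly close to `q j`.
theorem exists_eventually_mem_range_comp_of_isSheetsOver (e : A ≃ₜ closedBall (0 : E) 1)
    (hu : Continuous u) (hp : Continuous p) (hinj : Function.Injective fun x => (u x, (p x).2))
    {z : X} {q : ι → A → X} (hq : IsSheetsOver p (fun v => (v, (p z).2)) q) :
    ∃ c, ∀ᶠ x in 𝓝 z, ∀ g : A → X, Continuous g → (∀ v, p (g v) = (v, (p x).2)) →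
      x ∈ range g → c ∈ range (u ∘ g) := by
  have : CompactSpace A := e.symm.compactSpace
  have : PreconnectedSpace (closedBall (0 : E) 1) :=
    Subtype.preconnectedSpace (convex_closedBall 0 1).isPreconnected
  have : PreconnectedSpace A := e.symm.surjective.denseRange.preconnectedSpace e.symm.continuous
  obtain ⟨j, hj⟩ := hq.exists_eq (x := z) (v := (p z).1) rfl
  have huq {i k v w} (h : u (q i v) = u (q k w)) : q i v = q k w :=
    hinj (Prod.ext h (by simp only [hq.apply_eq]))
  let φ₀ : C(A, E) := ⟨u ∘ q j, hu.comp (hq.continuous j)⟩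
  obtain ⟨c, hc⟩ := exists_eventually_mem_range_of_homeomorph_closedBall e (φ₀ := φ₀)
    fun v w h => by simpa [hq.apply_eq] using congrArg p (huq h)
  obtain ⟨δ, hδ, hδc⟩ := Metric.eventually_nhds_iff.1 hc
  obtain ⟨a, ha, hgap⟩ := exists_forall_le_dist_of_ne (g := fun i => u ∘ q i)
    (fun i => hu.comp (hq.continuous i)) (fun v i k h => hq.injective v (huq h)) j
  obtain ⟨η, hη, hηlt⟩ := exists_between (lt_min ha hδ)
  obtain ⟨hηa, hηδ⟩ := lt_min_iff.1 hηlt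
  let d x := dist (u x) (φ₀ (p x).1)
  have hdq (i v) : d (q i v) = dist (u (q i v)) (u (q j v)) := by simp [d, φ₀, hq.apply_eq]
  have hdz : d z < η := by rwa [← hj, hdq, dist_self]
  have hdne (x) (hx : (p x).2 = (p z).2) : d x ≠ η := by
    obtain ⟨i, hi⟩ := hq.exists_eq (x := x) (v := (p x).1) (Prod.ext rfl hx)
    rw [← hi, hdq]
    rcases eq_or_ne i j with rfl | hij
    · rw [dist_self]
      exact hη.ne
    · exact (hηa.trans_le (hgap i hij _)).ne'
  refine ⟨c, ?_⟩
  filter_upwards [eventually_forall_lt_of_ne_on_fiber (A := A) (continuous_snd.comp hp)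
    (by fun_prop) hdz hdne] with x hx g hg hgp hgx
  refine hδc (y := ⟨u ∘ g, hu.comp hg⟩) ((ContinuousMap.dist_lt_iff hδ).2 fun v => ?_)
  have hdg : d (g v) < η := hx g hg (fun v => by simp [hgp]) hgx v
  simpa [d, hgp] using hdg.trans hηδ

theorem exists_injOn_nhds_of_isSheetsOver (e : A ≃ₜ closedBall (0 : E) 1)
    (hu : Continuous u) (hp : Continuous p) (hinj : Function.Injective fun x => (u x, (p x).2))
    (hlevel : ∀ s, ∃ q : ι → A → X, IsSheetsOver p (fun v => (v, s)) q) (z : X) :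
    ∃ U ∈ 𝓝 z, InjOn p U := by
  obtain ⟨q₀, hq₀⟩ := hlevel (p z).2
  obtain ⟨c, hc⟩ := exists_eventually_mem_range_comp_of_isSheetsOver e hu hp hinj hq₀
  refine ⟨_, hc, fun x hx y hy hxy => ?_⟩
  obtain ⟨q, hq⟩ := hlevel (p x).2
  obtain ⟨i, hi⟩ := hq.exists_eq (x := x) (v := (p x).1) rfl
  obtain ⟨k, hk⟩ := hq.exists_eq (x := y) (v := (p x).1) hxy.symm
  obtain ⟨v, hv⟩ := hx (q i) (hq.continuous i) (hq.apply_eq i) ⟨_, hi⟩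
  obtain ⟨w, hw⟩ := hy (q k) (hq.continuous k) (by simpa only [← hxy] using hq.apply_eq k)
    ⟨_, hk⟩
  have hqvw : q i v = q k w :=
    hinj (Prod.ext (hv.trans hw.symm) (by simp only [hq.apply_eq]))
  obtain rfl : v = w := by simpa [hq.apply_eq] using congrArg p hqvw
  rw [← hi, ← hk, hq.injective v hqvw]

theorem exists_isSheetsOver_id_of_forall_level [T2Space X] [T2Space A] [ContractibleSpace (A × S)]
    (e : A ≃ₜ closedBall (0 : E) 1)
    (hu : Continuous u) (hp : Continuous p) (hinj : Function.Injective fun x => (u x, (p x).2))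
    (hlevel : ∀ s, ∃ q : ι → A → X, IsSheetsOver p (fun v => (v, s)) q) :
    ∃ σ : ι → A × S → X, IsSheetsOver p id σ := by
  have hfiber (y : A × S) : Nonempty (p ⁻¹' {y} ≃ ι) := by
    obtain ⟨q, hq⟩ := hlevel y.2
    exact hq.nonempty_fiber_equiv y.1
  exact exists_isSheetsOver_id_of_isCoveringMap (isCoveringMap_of_locally_injOn_of_fiber_equiv hp
    hfiber (exists_injOn_nhds_of_isSheetsOver e hu hp hinj hlevel)) hfiber

end LevelSheets

section SymbolicDynamics

theorem zpow_apply_of_apply_eq_add_one {R Z : Type*} [AddCommGroupWithOne R] [TopologicalSpace Z]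
    {f : Z ≃ₜ Z} {x : R → Z} (hx : ∀ k, f (x k) = x (k + 1)) (n : ℤ) (k : R) :
    (f ^ n) (x k) = x (k + n) := by
  have hsymm (k : R) : f⁻¹ (x k) = x (k - 1) :=
    f.injective ((f.apply_symm_apply _).trans (by rw [hx, sub_add_cancel]))
  induction n generalizing k with
  | zero => simp
  | succ n ih => rw [zpow_add_one, Homeomorph.mul_apply, hx, ih]; push_cast; congr 1; abel
  | pred n ih => rw [zpow_sub_one, Homeomorph.mul_apply, hsymm, ih]; push_cast; congr 1; abel

variable {Z : Type*} [TopologicalSpace Z] {f : Z ≃ₜ Z} {K : Set Z}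

/-- The largest `f`-invariant subset of `K`: the points whose whole `f`-orbit stays in `K`. -/
def maximalInvariantSet (f : Z ≃ₜ Z) (K : Set Z) : Set Z :=
  ⋂ n : ℤ, ⇑(f ^ n) '' K

theorem mem_maximalInvariantSet {x : Z} : x ∈ maximalInvariantSet f K ↔ ∀ n : ℤ, (f ^ n) x ∈ K := by
  have himage (n : ℤ) : x ∈ ⇑(f ^ n) '' K ↔ (f ^ (-n)) x ∈ K := by
    rw [zpow_neg]
    exact mem_image_equiv (f := (f ^ n).toEquiv)
  simp only [maximalInvariantSet, mem_iInter, himage]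
  exact (Equiv.neg ℤ).forall_congr_left.trans (by simp)

theorem maximalInvariantSet_mono {L : Set Z} (hKL : K ⊆ L) :
    maximalInvariantSet f K ⊆ maximalInvariantSet f L :=
  iInter_mono fun _ => image_mono hKL

theorem apply_mem_maximalInvariantSet {x : Z} :
    f x ∈ maximalInvariantSet f K ↔ x ∈ maximalInvariantSet f K := by
  simp only [mem_maximalInvariantSet]
  exact (Equiv.addRight (1 : ℤ)).forall_congr fun n => by simp [zpow_add_one]

theorem image_maximalInvariantSet : f '' maximalInvariantSet f K = maximalInvariantSet f K :=
  Subset.antisymm (image_subset_iff.2 fun _ => apply_mem_maximalInvariantSet.2) fun x hx =>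
    ⟨f.symm x, apply_mem_maximalInvariantSet.1 (by simpa using hx), by simp⟩

theorem isCompact_maximalInvariantSet [T2Space Z] (hK : IsCompact K) :
    IsCompact (maximalInvariantSet f K) :=
  hK.of_isClosed_subset
    (isClosed_iInter fun n => (hK.image (f ^ n).continuous).isClosed)
    fun x hx => by simpa using mem_maximalInvariantSet.1 hx 0

variable {ι : Type*}

/-- The bi-infinite sequence of labels `ℓ` read along the orbit of a point of the maximal invariant
set of `K`. -/
def itinerary (f : Z ≃ₜ Z) (ℓ : K → ι) (x : maximalInvariantSet f K) (n : ℤ) : ι :=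
  ℓ ⟨(f ^ n) x, mem_maximalInvariantSet.1 x.2 n⟩

theorem itinerary_semiconj (ℓ : K → ι)
    (hf : MapsTo f (maximalInvariantSet f K) (maximalInvariantSet f K)) :
    Function.Semiconj (itinerary f ℓ) (hf.restrict f _ _) fun ω k => ω (k + 1) := fun x =>
  funext fun n => congrArg ℓ (Subtype.ext (by simp [zpow_add_one]))

variable [TopologicalSpace ι] {ℓ : K → ι}

theorem continuous_itinerary (hℓ : Continuous ℓ) : Continuous (itinerary f ℓ) :=
  continuous_pi fun n => hℓ.comp
    (((f ^ n).continuous.comp continuous_subtype_val).subtype_mk _)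

theorem mem_closure_of_forall_periodic {P : Set (ℤ → ι)}
    (hP : ∀ (M : ℕ) (w : ZMod (M + 1) → ι), (fun n : ℤ => w n) ∈ P) (ω : ℤ → ι) :
    ω ∈ closure P := by
  let w (m : ℕ) (k : ZMod (2 * m + 1)) : ι := ω k.valMinAbs
  refine mem_closure_of_tendsto (f := fun m (n : ℤ) => w m n) (b := Filter.atTop)
    (tendsto_pi_nhds.2 fun n => ?_) (.of_forall fun m => hP (2 * m) (w m))
  refine tendsto_const_nhds.congr' ?_
  filter_upwards [Filter.eventually_ge_atTop n.natAbs] with m hm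
  have hn : (n : ZMod (2 * m + 1)).valMinAbs = n :=
    (ZMod.valMinAbs_spec _ _).2 ⟨rfl, by simp only [mem_Ioc]; push_cast; omega⟩
  simp only [w, hn]

theorem itinerary_surjective_of_forall_periodic [T2Space Z] [T2Space ι] (hK : IsCompact K)
    (hℓ : Continuous ℓ)
    (hperiodic : ∀ (M : ℕ) (w : ZMod (M + 1) → ι), ∃ x : ZMod (M + 1) → K,
      ∀ k, ℓ (x k) = w k ∧ f (x k) = x (k + 1)) :
    Function.Surjective (itinerary f ℓ) := by
  have : CompactSpace (maximalInvariantSet f K) :=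
    isCompact_iff_compactSpace.1 (isCompact_maximalInvariantSet hK)
  intro ω
  refine (isCompact_range (continuous_itinerary hℓ)).isClosed.closure_subset
    (mem_closure_of_forall_periodic (fun M w => ?_) ω)
  obtain ⟨x, hx⟩ := hperiodic M w
  have horbit (n : ℤ) : (f ^ n) (x 0) = x n := by
    simpa using zpow_apply_of_apply_eq_add_one (x := fun k => (x k : Z)) (fun k => (hx k).2) n 0
  refine ⟨⟨x 0, mem_maximalInvariantSet.2 fun n => horbit n ▸ (x n).2⟩, funext fun n => ?_⟩
  simp only [itinerary, horbit, (hx _).1]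

end SymbolicDynamics

section Closing

universe u

variable {A S X : Type*} {κ : Type} {V : Type u}

-- The horizontal coordinate of `y k` is prescribed by its successor and the vertical one by its
-- predecessor, so the solutions are the fixed points of a self-map of `κ → A × S`.
theorem exists_forall_eq_of_crossed_sections [TopologicalSpace A] [TopologicalSpace S]
    [CompactSpace A] [CompactSpace S] [TietzeExtension.{u} A] [TietzeExtension.{u} S]
    [NormedAddCommGroup V] [NormedSpace ℝ V] [FiniteDimensional ℝ V] {i : A × S → V}
    (hi : IsClosedEmbedding i) [Finite κ] (τ : Equiv.Perm κ) [TopologicalSpace X]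
    {g h : X → A × S} (hg : Continuous g) (hh : Continuous h) {σ : κ → A × S → X}
    (hσ : ∀ k, Continuous (σ k)) (hgσ : ∀ k y, (g (σ k y)).1 = y.1)
    (hhσ : ∀ k y, (h (σ k y)).2 = y.2) :
    ∃ y : κ → A × S, ∀ k, g (σ k (y k)) = h (σ (τ k) (y (τ k))) := by
  have := Fintype.ofFinite κ
  obtain ⟨y, hy⟩ := exists_fixedPoint_of_isClosedEmbedding
    (IsClosedEmbedding.piMap fun _ : κ => hi)
    (T := fun y k => ((h (σ (τ k) (y (τ k)))).1, (g (σ (τ.symm k) (y (τ.symm k)))).2))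
    (by fun_prop)
  have hy₁ (k) : (h (σ (τ k) (y (τ k)))).1 = (y k).1 := (Prod.ext_iff.1 (congrFun hy k)).1
  have hy₂ (k) : (g (σ k (y k))).2 = (y (τ k)).2 := by
    simpa using congrArg Prod.snd (congrFun hy (τ k))
  exact ⟨y, fun k => Prod.ext ((hgσ _ _).trans (hy₁ k).symm) ((hy₂ k).trans (hhσ _ _).symm)⟩

end Closing

section Horseshoe

variable {E F ι : Type*} {A : Set E} {S : Set F}

/-- The points of `R` that `f` maps back into `R`. -/
def returnSet {Z : Type*} (f : Z → Z) (R : Set Z) : Set Z :=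
  R ∩ f ⁻¹' R

/-- The mixed coordinates of a point `x` of `A ×ˢ S` with `f x ∈ A ×ˢ S`: the horizontal coordinate
of `f x` and the vertical coordinate of `x`. -/
def crossingCoord (f : E × F → E × F) (x : returnSet f (A ×ˢ S)) : A × S :=
  (⟨(f x).1, x.2.2.1⟩, ⟨(x : E × F).2, x.2.1.2⟩)

variable [TopologicalSpace E] [TopologicalSpace F] {f : E × F ≃ₜ E × F}

theorem continuous_crossingCoord :
    Continuous (crossingCoord f : returnSet f (A ×ˢ S) → A × S) := by
  unfold crossingCoord
  fun_prop

theorem isClosedEmbedding_prodMap_subtypeVal [T2Space E] [T2Space F] [CompactSpace A]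
    [CompactSpace S] : IsClosedEmbedding (Prod.map (↑) (↑) : A × S → E × F) :=
  (isCompact_iff_compactSpace.2 ‹_›).isClosed.isClosedEmbedding_subtypeVal.prodMap
    (isCompact_iff_compactSpace.2 ‹_›).isClosed.isClosedEmbedding_subtypeVal

theorem isCompact_returnSet {Z : Type*} [TopologicalSpace Z] [T2Space Z] {f : Z → Z} {R : Set Z}
    (hf : Continuous f) (hR : IsCompact R) : IsCompact (returnSet f R) :=
  hR.inter_right (hR.isClosed.preimage hf)

theorem exists_isSheetsOver_crossingCoord_of_isHorizontalSlice {s : S} {h : ι → Set (E × F)}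
    (hslice : ∀ i, IsHorizontalSlice A S (h i)) (hdisj : ∀ i j, i ≠ j → Disjoint (h i) (h j))
    (himage : f '' horizontalDisk A (s : F) ∩ A ×ˢ S = ⋃ i, h i) :
    ∃ q : ι → A → returnSet f (A ×ˢ S), IsSheetsOver (crossingCoord f) (fun v => (v, s)) q := by
  choose ψ hψ hgraph using hslice
  have hmem (i) (v : A) : ((v : E), (ψ i v : F)) ∈ h i := hgraph i ▸ ⟨v, rfl⟩
  have hsub (i) (v : A) :
      ((v : E), (ψ i v : F)) ∈ f '' horizontalDisk A (s : F) ∩ A ×ˢ S :=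
    himage ▸ mem_iUnion.2 ⟨i, hmem i v⟩
  have hdisk (i) (v : A) : f.symm (v, ψ i v) ∈ horizontalDisk A (s : F) := by
    obtain ⟨x, hx, hfx⟩ := (hsub i v).1
    rwa [← hfx, f.symm_apply_apply]
  have hreturn (i) (v : A) : f.symm (v, ψ i v) ∈ returnSet f (A ×ˢ S) :=
    ⟨⟨(hdisk i v).1, by simp [show (f.symm (v, ψ i v)).2 = s from (hdisk i v).2]⟩, by simp⟩
  refine ⟨fun i v => ⟨_, hreturn i v⟩, fun i => by fun_prop, fun i v => ?_,
    fun v i j hij => ?_, fun {x v} hx => ?_⟩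
  · exact Prod.ext (Subtype.ext (by simp [crossingCoord])) (Subtype.ext (hdisk i v).2)
  · by_contra hne
    have hψij : ((v : E), (ψ i v : F)) =
        ((v : E), (ψ j v : F)) := f.symm.injective (congrArg Subtype.val hij)
    exact disjoint_left.1 (hdisj i j hne) (hmem i v) (hψij ▸ hmem j v)
  · have hfx : f x ∈ ⋃ i, h i :=
      himage ▸ ⟨mem_image_of_mem f ⟨x.2.1.1, congrArg (fun y : A × S => (y.2 : F)) hx⟩, x.2.2⟩
    obtain ⟨i, hi⟩ := mem_iUnion.1 hfx
    rw [hgraph] at hi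
    obtain ⟨v', hv'⟩ := hi
    obtain rfl : v' = v :=
      Subtype.ext ((congrArg Prod.fst hv').symm.trans (congrArg (fun y : A × S => (y.1 : E)) hx))
    exact ⟨i, Subtype.ext (f.symm_apply_eq.2 hv'.symm)⟩

end Horseshoe

section Rectangle

universe u

variable {E F : Type u} [NormedAddCommGroup E] [NormedSpace ℝ E] [FiniteDimensional ℝ E]
  [NormedAddCommGroup F] [NormedSpace ℝ F] {A : Set E} {S : Set F}
  [CompactSpace A] [CompactSpace S] [TietzeExtension.{u} A] [TietzeExtension.{u} S]
  {f : E × F ≃ₜ E × F}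

theorem exists_isSheetsOver_crossingCoord {ι : Type*} [Finite ι]
    (e : A ≃ₜ closedBall (0 : E) 1)
    (hslices : ∀ s ∈ S, ∃ h : ι → Set (E × F), (∀ i, IsHorizontalSlice A S (h i)) ∧
      (∀ i j, i ≠ j → Disjoint (h i) (h j)) ∧ f '' horizontalDisk A s ∩ A ×ˢ S = ⋃ i, h i) :
    ∃ σ : ι → A × S → returnSet f (A ×ˢ S), IsSheetsOver (crossingCoord f) id σ := by
  have hR : IsCompact (A ×ˢ S) :=
    (isCompact_iff_compactSpace.2 ‹_›).prod (isCompact_iff_compactSpace.2 ‹_›)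
  have : CompactSpace (returnSet f (A ×ˢ S)) :=
    isCompact_iff_compactSpace.1 (isCompact_returnSet f.continuous hR)
  have : ContractibleSpace (A × S) :=
    contractibleSpace_of_isClosedEmbedding isClosedEmbedding_prodMap_subtypeVal
  refine exists_isSheetsOver_id_of_forall_level e
    (u := fun x : returnSet f (A ×ˢ S) => (x : E × F).1) (by fun_prop)
    continuous_crossingCoord (fun x y hxy => ?_) fun s => ?_
  · exact Subtype.ext (Prod.ext (Prod.mk.inj hxy).1 (congrArg Subtype.val (Prod.mk.inj hxy).2))
  · obtain ⟨h, hslice, hdisj, himage⟩ := hslices s s.2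
    exact exists_isSheetsOver_crossingCoord_of_isHorizontalSlice hslice hdisj himage

variable [FiniteDimensional ℝ F]

theorem exists_orbit_of_isSheetsOver_crossingCoord {ι : Type*} {κ : Type} [Finite κ]
    {σ : ι → A × S → returnSet f (A ×ˢ S)} (hσ : IsSheetsOver (crossingCoord f) id σ)
    (τ : Equiv.Perm κ) (w : κ → ι) :
    ∃ x : κ → returnSet f (A ×ˢ S), ∀ k, x k ∈ range (σ (w k)) ∧ f (x k) = x (τ k) := by
  obtain ⟨y, hy⟩ := exists_forall_eq_of_crossed_sections isClosedEmbedding_prodMap_subtypeVal τ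
    (g := fun x : returnSet f (A ×ˢ S) => (⟨(f x).1, x.2.2.1⟩, ⟨(f x).2, x.2.2.2⟩))
    (h := fun x => (⟨(x : E × F).1, x.2.1.1⟩, ⟨(x : E × F).2, x.2.1.2⟩))
    (by fun_prop) (by fun_prop) (fun k => hσ.continuous (w k))
    (fun k y => (Prod.ext_iff.1 (hσ.apply_eq (w k) y)).1)
    (fun k y => (Prod.ext_iff.1 (hσ.apply_eq (w k) y)).2)
  exact ⟨fun k => σ (w k) (y k), fun k => ⟨⟨_, rfl⟩,
    congrArg (Prod.map Subtype.val Subtype.val) (hy k)⟩⟩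

end Rectangle

theorem stmt_0_general.{u} {E F : Type u} [NormedAddCommGroup E] [NormedSpace ℝ E]
    [FiniteDimensional ℝ E] [NormedAddCommGroup F] [NormedSpace ℝ F] [FiniteDimensional ℝ F]
    {A : Set E} {S : Set F} (e : A ≃ₜ closedBall (0 : E) 1) (hS : IsCompact S)
    [TietzeExtension.{u} S] (f : E × F ≃ₜ E × F) (N : ℕ) (hN : 1 ≤ N)
    (hslices : ∀ s ∈ S, ∃ h : Fin N → Set (E × F), (∀ i, IsHorizontalSlice A S (h i)) ∧
      (∀ i j, i ≠ j → Disjoint (h i) (h j)) ∧ f '' horizontalDisk A s ∩ A ×ˢ S = ⋃ i, h i) :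
    ∃ Λ : Set (E × F), Λ.Nonempty ∧ IsCompact Λ ∧ Λ ⊆ ⋂ n : ℤ, ⇑(f ^ n) '' (A ×ˢ S) ∧
      f '' Λ = Λ ∧
      ∃ (hΛ : MapsTo f Λ Λ) (π : Λ → (ℤ → Fin N)), Continuous π ∧ Function.Surjective π ∧
        Function.Semiconj π (hΛ.restrict f Λ Λ) (fullShift N) := by
  have : CompactSpace A := e.symm.compactSpace
  have : CompactSpace S := isCompact_iff_compactSpace.1 hS
  have : TietzeExtension.{u} A := .of_homeo e
  have hK : IsCompact (returnSet f (A ×ˢ S)) :=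
    isCompact_returnSet f.continuous ((isCompact_iff_compactSpace.2 ‹_›).prod hS)
  obtain ⟨σ, hσ⟩ := exists_isSheetsOver_crossingCoord e hslices
  obtain ⟨ℓ, hℓ, hℓσ⟩ := hσ.exists_continuous_index
  have hsurj : Function.Surjective (itinerary f ℓ) :=
    itinerary_surjective_of_forall_periodic hK hℓ fun M w => by
      obtain ⟨x, hx⟩ := exists_orbit_of_isSheetsOver_crossingCoord hσ (Equiv.addRight 1) w
      refine ⟨x, fun k => ⟨?_, (hx k).2⟩⟩
      obtain ⟨y, hy⟩ := (hx k).1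
      rw [← hy, hℓσ]
  obtain ⟨x, -⟩ := hsurj fun _ => ⟨0, hN⟩
  exact ⟨maximalInvariantSet f (returnSet f (A ×ˢ S)), ⟨x, x.2⟩,
    isCompact_maximalInvariantSet hK,
    maximalInvariantSet_mono inter_subset_left, image_maximalInvariantSet,
    fun _ => apply_mem_maximalInvariantSet.2, itinerary f ℓ, continuous_itinerary hℓ, hsurj,
    itinerary_semiconj ℓ _⟩

theorem stmt_0 (nu ns : ℕ) (hnu : 1 ≤ nu) (hns : 1 ≤ ns)
    (Iu : Set (EuclideanSpace ℝ (Fin nu))) (Is : Set (EuclideanSpace ℝ (Fin ns)))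
    (hIu : IsCompactDisk Iu) (hIs : IsCompactDisk Is)
    (f : (EuclideanSpace ℝ (Fin nu) × EuclideanSpace ℝ (Fin ns)) ≃ₜ
      (EuclideanSpace ℝ (Fin nu) × EuclideanSpace ℝ (Fin ns)))
    (N : ℕ) (hN : 1 ≤ N)
    (hslices : ∀ s ∈ Is,
      ∃ h : Fin N → Set (EuclideanSpace ℝ (Fin nu) × EuclideanSpace ℝ (Fin ns)),
        (∀ i, IsHorizontalSlice Iu Is (h i)) ∧
        (∀ i j, i ≠ j → Disjoint (h i) (h j)) ∧
        (f '' horizontalDisk Iu s) ∩ (Iu ×ˢ Is) = ⋃ i, h i) :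
    ∃ Λ : Set (EuclideanSpace ℝ (Fin nu) × EuclideanSpace ℝ (Fin ns)),
      Λ.Nonempty ∧ IsCompact Λ ∧
      Λ ⊆ ⋂ n : ℤ, ⇑(f ^ n) '' (Iu ×ˢ Is) ∧
      f '' Λ = Λ ∧
      ∃ (hΛ : Set.MapsTo f Λ Λ) (π : Λ → (ℤ → Fin N)),
        Continuous π ∧ Function.Surjective π ∧
        Function.Semiconj π (hΛ.restrict f Λ Λ) (fullShift N) := by
  obtain ⟨eu⟩ := hIu
  obtain ⟨es⟩ := hIs
  have : CompactSpace Is := es.symm.compactSpace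
  have : TietzeExtension Is := .of_homeo es
  exact stmt_0_general eu (isCompact_iff_compactSpace.2 ‹_›) f N hN hslices
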